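/- arXiv:2404.19649 — 2 statements merged into one kernel-verified Lean document; each statement's English description precedes it below -/
import Mathlib

section
/- Let d ≥ 1, let K1, K2 : [0,∞) → [0,∞) be continuous functions satisfying K_i(t) ≤ c₁ e^{−c₂ t²} for some constants c₁, c₂ > 0 and normalized so that ∫_{ℝ^d} K_i(‖x‖) dx = 1 for i = 1, 2. Set μ₂(K1) := ∫_{ℝ^d} ‖x‖² K1(‖x‖) dx and let R be an invertible d×d real matrix. Then for all a, b ∈ ℝ^d, ∫_{ℝ^d} ∫_{ℝ^d} K1(‖Rw‖) K2(‖w − v‖) (a·w)(b·v) dv dw = (μ₂(K1)/(d·|det R|)) · aᵀ (RᵀR)^{−1} b. -/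
open Finset Matrix MeasureTheory

theorem aux_integrable {d : ℕ} (f : (Fin d → ℝ) → ℝ) (hf : Continuous f) (C c : ℝ) (hc : 0 < c)
    (hb : ∀ x, |f x| ≤ C * Real.exp (-c * ∑ i, x i ^ 2)) : Integrable f := by
  have h1 : Integrable (fun x : Fin d → ℝ => ∏ i, Real.exp (-c * x i ^ 2)) :=
    Integrable.fintype_prod (f := fun _ t => Real.exp (-c * t ^ 2))
      (fun _ => integrable_exp_neg_mul_sq hc)
  refine (h1.const_mul C).mono' hf.aestronglyMeasurable (Filter.Eventually.of_forall fun x => ?_)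
  rw [Real.norm_eq_abs, ← Real.exp_sum, ← Finset.mul_sum]
  exact hb x

theorem aux_mul_exp (c N : ℝ) (hc : 0 < c) :
    (1 + N) * Real.exp (-c * N) ≤ (1 + 2 / c) * (Real.exp (-(c / 2) * N)) ∨ N < 0 := by
  by_cases hN : N < 0
  · exact Or.inr hN
  left
  push Not at hN
  have h1 : Real.exp (-c * N) = Real.exp (-(c / 2) * N) * Real.exp (-(c / 2) * N) := by
    rw [← Real.exp_add]; ring_nf
  have h2 : (c / 2) * N + 1 ≤ Real.exp (c / 2 * N) := Real.add_one_le_exp _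
  have h3 : Real.exp (-(c / 2) * N) * Real.exp (c / 2 * N) = 1 := by
    rw [← Real.exp_add]; simp
  have hp := Real.exp_pos (-(c / 2) * N)
  have h4 : 1 + N ≤ (1 + 2 / c) * ((c / 2) * N + 1) := by
    have : (1 + 2 / c) * ((c / 2) * N + 1) = 1 + N + (c / 2 * N + 2 / c) := by field_simp; ring
    rw [this]
    have : 0 ≤ c / 2 * N + 2 / c := by positivity
    linarith
  have h5 : 1 + N ≤ (1 + 2 / c) * Real.exp (c / 2 * N) :=
    h4.trans (mul_le_mul_of_nonneg_left h2 (by positivity))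
  rw [h1]
  have h6 : (1 + N) * Real.exp (-(c / 2) * N) ≤ 1 + 2 / c := by
    calc _ ≤ (1 + 2 / c) * Real.exp (c / 2 * N) * Real.exp (-(c / 2) * N) :=
          mul_le_mul_of_nonneg_right h5 hp.le
      _ = (1 + 2 / c) * (Real.exp (-(c / 2) * N) * Real.exp (c / 2 * N)) := by ring
      _ = _ := by rw [h3, mul_one]
  nlinarith

theorem aux_kernel_integrable {d : ℕ} (K : ℝ → ℝ) (hK : Continuous K)
    (hnn : ∀ t, 0 ≤ t → 0 ≤ K t) (c1 c2 : ℝ) (hc1 : 0 < c1) (hc2 : 0 < c2)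
    (hb : ∀ t, 0 ≤ t → K t ≤ c1 * Real.exp (-c2 * t ^ 2))
    (g : (Fin d → ℝ) → ℝ) (hg : Continuous g) (hgb : ∀ x, |g x| ≤ 1 + ∑ i, x i ^ 2) :
    Integrable (fun x : Fin d → ℝ => K (Real.sqrt (∑ i, x i ^ 2)) * g x) := by
  refine aux_integrable _ (by fun_prop) (c1 * (1 + 2 / c2)) (c2 / 2) (by positivity) fun x => ?_
  have hN : 0 ≤ ∑ i, x i ^ 2 := Finset.sum_nonneg fun i _ => sq_nonneg _
  have h1 := hb _ (Real.sqrt_nonneg (∑ i, x i ^ 2))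
  rw [Real.sq_sqrt hN] at h1
  have h0 := hnn _ (Real.sqrt_nonneg (∑ i, x i ^ 2))
  rw [abs_mul, abs_of_nonneg h0]
  rcases aux_mul_exp c2 (∑ i, x i ^ 2) hc2 with h | h
  · calc _ ≤ (c1 * Real.exp (-c2 * ∑ i, x i ^ 2)) * (1 + ∑ i, x i ^ 2) :=
          mul_le_mul h1 (hgb x) (abs_nonneg _) (by positivity)
      _ = c1 * ((1 + ∑ i, x i ^ 2) * Real.exp (-c2 * ∑ i, x i ^ 2)) := by ring
      _ ≤ c1 * ((1 + 2 / c2) * (Real.exp (-(c2 / 2) * ∑ i, x i ^ 2))) :=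
          mul_le_mul_of_nonneg_left h hc1.le
      _ = _ := by ring
  · exact absurd h (not_lt.mpr hN)

theorem aux_cv {d : ℕ} (M : Matrix (Fin d) (Fin d) ℝ) (hM : M.det ≠ 0) (f : (Fin d → ℝ) → ℝ)
    (hf : Continuous f) :
    ∫ w : Fin d → ℝ, f (M.mulVec w) = |M.det|⁻¹ * ∫ u : Fin d → ℝ, f u := by
  have h := Real.map_matrix_volume_pi_eq_smul_volume_pi hM
  have h2 : ∫ w : Fin d → ℝ, f (M.mulVec w) =
      ∫ u, f u ∂(Measure.map (Matrix.toLin' M) (volume : Measure (Fin d → ℝ))) := by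
    rw [integral_map]
    · simp [Matrix.toLin'_apply]
    · exact (LinearMap.continuous_of_finiteDimensional _).aemeasurable
    · exact hf.aestronglyMeasurable
  rw [h2, h, integral_smul_measure, ENNReal.toReal_ofReal (abs_nonneg _), smul_eq_mul, abs_inv]

theorem aux_coord_sq {d : ℕ} (x : Fin d → ℝ) (i : Fin d) : x i ^ 2 ≤ ∑ i, x i ^ 2 :=
  Finset.single_le_sum (f := fun i => x i ^ 2) (fun i _ => sq_nonneg _) (Finset.mem_univ i)

theorem aux_coord {d : ℕ} (x : Fin d → ℝ) (i : Fin d) : |x i| ≤ 1 + ∑ i, x i ^ 2 := by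
  have := aux_coord_sq x i
  rw [abs_le]
  constructor <;> nlinarith [sq_nonneg (x i - 1), sq_nonneg (x i + 1)]

theorem aux_coord2 {d : ℕ} (x : Fin d → ℝ) (i j : Fin d) : |x i * x j| ≤ 1 + ∑ i, x i ^ 2 := by
  have h1 := aux_coord_sq x i
  have h2 := aux_coord_sq x j
  rw [abs_le]
  constructor <;> nlinarith [sq_nonneg (x i - x j), sq_nonneg (x i + x j)]

theorem aux_offdiag {d : ℕ} (K : ℝ → ℝ) (hK : Continuous K) (i j : Fin d) (hij : i ≠ j) :
    ∫ x : Fin d → ℝ, K (Real.sqrt (∑ i, x i ^ 2)) * (x i * x j) = 0 := by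
  have hdet : (Matrix.diagonal (Function.update (1 : Fin d → ℝ) i (-1))).det = -1 := by
    rw [Matrix.det_diagonal, Finset.prod_update_of_mem (Finset.mem_univ i)]
    simp
  have h := aux_cv (Matrix.diagonal (Function.update (1 : Fin d → ℝ) i (-1)))
    (by rw [hdet]; norm_num)
    (fun x => K (Real.sqrt (∑ i, x i ^ 2)) * (x i * x j)) (by fun_prop)
  rw [hdet] at h
  have hs : ∀ k, (Function.update (1 : Fin d → ℝ) i (-1) k) ^ 2 = 1 := by
    intro k
    by_cases hk : k = i
    · subst hk; simp
    · simp [hk]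
  simp only [Matrix.mulVec_diagonal, mul_pow, hs, one_mul, Function.update_self,
    Function.update_of_ne hij.symm, Pi.one_apply] at h
  have h3 : ∀ x : Fin d → ℝ, K (Real.sqrt (∑ i, x i ^ 2)) * (-1 * x i * x j)
      = - (K (Real.sqrt (∑ i, x i ^ 2)) * (x i * x j)) := fun x => by ring
  simp only [h3, integral_neg] at h
  norm_num at h
  linarith

theorem aux_diag_eq {d : ℕ} (K : ℝ → ℝ) (i j : Fin d) :
    ∫ x : Fin d → ℝ, K (Real.sqrt (∑ i, x i ^ 2)) * (x i * x i) =
    ∫ x : Fin d → ℝ, K (Real.sqrt (∑ i, x i ^ 2)) * (x j * x j) := by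
  have h := (volume_measurePreserving_piCongrLeft (fun _ : Fin d => ℝ) (Equiv.swap i j))
  have h2 := h.integral_comp' (fun x : Fin d → ℝ => K (Real.sqrt (∑ i, x i ^ 2)) * (x i * x i))
  rw [← h2]
  congr 1
  funext x
  have e : ∀ k, MeasurableEquiv.piCongrLeft (fun _ : Fin d => ℝ) (Equiv.swap i j) x k
      = x (Equiv.swap i j k) := by
    intro k
    have := MeasurableEquiv.piCongrLeft_apply_apply (β := fun _ : Fin d => ℝ) (Equiv.swap i j) x
      (Equiv.swap i j k)
    simpa using this
  simp only [e, Equiv.swap_apply_left]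
  rw [Equiv.sum_comp (Equiv.swap i j) (fun k => x k ^ 2)]

theorem aux_second {d : ℕ} (hd : 1 ≤ d) (K : ℝ → ℝ) (hK : Continuous K)
    (hnn : ∀ t, 0 ≤ t → 0 ≤ K t) (c1 c2 : ℝ) (hc1 : 0 < c1) (hc2 : 0 < c2)
    (hb : ∀ t, 0 ≤ t → K t ≤ c1 * Real.exp (-c2 * t ^ 2)) (p q : Fin d → ℝ) :
    ∫ x : Fin d → ℝ, K (Real.sqrt (∑ i, x i ^ 2)) * ((p ⬝ᵥ x) * (q ⬝ᵥ x)) =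
    (∫ x : Fin d → ℝ, (∑ i, x i ^ 2) * K (Real.sqrt (∑ i, x i ^ 2))) / d * (p ⬝ᵥ q) := by
  have hint : ∀ i j : Fin d, Integrable
      (fun x : Fin d → ℝ => K (Real.sqrt (∑ i, x i ^ 2)) * (x i * x j)) := fun i j =>
    aux_kernel_integrable K hK hnn c1 c2 hc1 hc2 hb _ (by fun_prop) (fun x => aux_coord2 x i j)
  have i0 : Fin d := ⟨0, hd⟩
  set m := ∫ x : Fin d → ℝ, K (Real.sqrt (∑ i, x i ^ 2)) * (x i0 * x i0) with hm
  have hmu : ∫ x : Fin d → ℝ, (∑ i, x i ^ 2) * K (Real.sqrt (∑ i, x i ^ 2)) = d * m := by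
    have : ∀ x : Fin d → ℝ, (∑ i, x i ^ 2) * K (Real.sqrt (∑ i, x i ^ 2))
        = ∑ k, K (Real.sqrt (∑ i, x i ^ 2)) * (x k * x k) := by
      intro x
      rw [← Finset.mul_sum, mul_comm]
      simp only [sq]
    simp only [this]
    rw [integral_finsetSum _ (fun k _ => hint k k)]
    rw [Finset.sum_congr rfl (fun k _ => aux_diag_eq K k i0)]
    simp [hm]
  have hM : ∀ i j : Fin d, ∫ x : Fin d → ℝ, K (Real.sqrt (∑ i, x i ^ 2)) * (x i * x j)
      = if i = j then m else 0 := by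
    intro i j
    split_ifs with h
    · subst h; exact aux_diag_eq K i i0
    · exact aux_offdiag K hK i j h
  have hd' : (d : ℝ) ≠ 0 := by positivity
  rw [hmu, mul_div_cancel_left₀ _ hd']
  have hexp : ∀ x : Fin d → ℝ, K (Real.sqrt (∑ i, x i ^ 2)) * ((p ⬝ᵥ x) * (q ⬝ᵥ x))
      = ∑ i, ∑ j, p i * q j * (K (Real.sqrt (∑ i, x i ^ 2)) * (x i * x j)) := by
    intro x
    simp only [dotProduct]
    rw [Finset.sum_mul_sum, Finset.mul_sum]
    refine Finset.sum_congr rfl fun i _ => ?_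
    rw [Finset.mul_sum]
    refine Finset.sum_congr rfl fun j _ => ?_
    ring
  simp only [hexp]
  rw [integral_finsetSum _ (fun i _ => integrable_finsetSum _
    (fun j _ => (hint i j).const_mul _))]
  simp only [dotProduct, Finset.mul_sum]
  refine Finset.sum_congr rfl fun i _ => ?_
  rw [integral_finsetSum _ (fun j _ => (hint i j).const_mul _)]
  simp only [integral_const_mul, hM]
  simp
  ring

theorem aux_inner {d : ℕ} (K : ℝ → ℝ) (hK : Continuous K)
    (hnn : ∀ t, 0 ≤ t → 0 ≤ K t) (c1 c2 : ℝ) (hc1 : 0 < c1) (hc2 : 0 < c2)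
    (hb : ∀ t, 0 ≤ t → K t ≤ c1 * Real.exp (-c2 * t ^ 2))
    (hnorm : (∫ x : Fin d → ℝ, K (Real.sqrt (∑ i, x i ^ 2))) = 1) (b w : Fin d → ℝ) :
    ∫ v : Fin d → ℝ, K (Real.sqrt (∑ i, (w i - v i) ^ 2)) * (∑ i, b i * v i)
      = ∑ i, b i * w i := by
  have hint0 : Integrable (fun x : Fin d → ℝ => K (Real.sqrt (∑ i, x i ^ 2))) := by
    by_contra h
    rw [integral_undef h] at hnorm
    norm_num at hnorm
  have hint : ∀ i : Fin d, Integrable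
      (fun x : Fin d → ℝ => K (Real.sqrt (∑ i, x i ^ 2)) * x i) := fun i =>
    aux_kernel_integrable K hK hnn c1 c2 hc1 hc2 hb _ (by fun_prop) (fun x => aux_coord x i)
  have hodd : ∀ i : Fin d, ∫ x : Fin d → ℝ, K (Real.sqrt (∑ i, x i ^ 2)) * x i = 0 := by
    intro i
    have h := integral_neg_eq_self
      (fun x : Fin d → ℝ => K (Real.sqrt (∑ i, x i ^ 2)) * x i) volume
    simp only [Pi.neg_apply, neg_sq, mul_neg, integral_neg] at h
    linarith
  have h := integral_sub_left_eq_self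
    (fun x : Fin d → ℝ => K (Real.sqrt (∑ i, x i ^ 2)) * (∑ i, b i * (w i - x i))) volume w
  simp only [Pi.sub_apply, sub_sub_cancel] at h
  rw [h]
  have hexp : ∀ x : Fin d → ℝ, K (Real.sqrt (∑ i, x i ^ 2)) * (∑ i, b i * (w i - x i))
      = ∑ j, (b j * w j * K (Real.sqrt (∑ i, x i ^ 2))
        - b j * (K (Real.sqrt (∑ i, x i ^ 2)) * x j)) := by
    intro x
    rw [Finset.mul_sum]
    refine Finset.sum_congr rfl fun j _ => ?_
    ring
  simp only [hexp]
  rw [integral_finsetSum]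
  swap
  · exact fun j _ => (hint0.const_mul _).sub ((hint j).const_mul _)
  refine Finset.sum_congr rfl fun j _ => ?_
  rw [integral_sub (hint0.const_mul _) ((hint j).const_mul _), integral_const_mul,
    integral_const_mul, hodd, hnorm]
  ring

/-- First-order cross-moment of the composed landmark alternating
diffusion kernel.  With `K1, K2 : [0,∞) → [0,∞)` continuous, bounded by Gaussians and
normalized so that `∫ Kᵢ(‖x‖) dx = 1`, `μ₂(K1) = ∫ ‖x‖² K1(‖x‖) dx`, and `R` an
invertible `d × d` real matrix, one has for all `a, b ∈ ℝ^d`: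
`∫∫ K1(‖Rw‖) K2(‖w−v‖) (a·w)(b·v) dv dw = (μ₂(K1)/(d·|det R|)) · aᵀ (RᵀR)⁻¹ b`
(Euclidean norms and inner products, Lebesgue measure). -/
theorem composed_kernel_first_order_cross_moment {d : ℕ} (hd : 1 ≤ d)
    (K1 K2 : ℝ → ℝ) (hK1c : Continuous K1) (hK2c : Continuous K2)
    (hK1nn : ∀ t, 0 ≤ t → 0 ≤ K1 t) (hK2nn : ∀ t, 0 ≤ t → 0 ≤ K2 t)
    (c1 c2 : ℝ) (hc1 : 0 < c1) (hc2 : 0 < c2)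
    (hK1b : ∀ t, 0 ≤ t → K1 t ≤ c1 * Real.exp (-c2 * t ^ 2))
    (hK2b : ∀ t, 0 ≤ t → K2 t ≤ c1 * Real.exp (-c2 * t ^ 2))
    (hK1norm : (∫ x : Fin d → ℝ, K1 (Real.sqrt (∑ i, x i ^ 2))) = 1)
    (hK2norm : (∫ x : Fin d → ℝ, K2 (Real.sqrt (∑ i, x i ^ 2))) = 1)
    (mu2K1 : ℝ)
    (hmu2K1 : mu2K1 = ∫ x : Fin d → ℝ, (∑ i, x i ^ 2) * K1 (Real.sqrt (∑ i, x i ^ 2)))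
    (R : Matrix (Fin d) (Fin d) ℝ) (hR : IsUnit R.det) :
    ∀ a b : Fin d → ℝ,
      (∫ w : Fin d → ℝ, ∫ v : Fin d → ℝ,
          K1 (Real.sqrt (∑ i, (R.mulVec w i) ^ 2))
            * K2 (Real.sqrt (∑ i, (w i - v i) ^ 2))
            * ((∑ i, a i * w i) * (∑ i, b i * v i)))
        = mu2K1 / (d * |R.det|) * (a ⬝ᵥ ((Rᵀ * R)⁻¹).mulVec b) := by
  intro a b
  have hdet : R.det ≠ 0 := hR.ne_zero
  have h1 : ∀ w : Fin d → ℝ, (∫ v : Fin d → ℝ,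
          K1 (Real.sqrt (∑ i, (R.mulVec w i) ^ 2))
            * K2 (Real.sqrt (∑ i, (w i - v i) ^ 2))
            * ((∑ i, a i * w i) * (∑ i, b i * v i)))
      = K1 (Real.sqrt (∑ i, (R.mulVec w i) ^ 2)) *
        (((R⁻¹)ᵀ.mulVec a ⬝ᵥ R.mulVec w) * ((R⁻¹)ᵀ.mulVec b ⬝ᵥ R.mulVec w)) := by
    intro w
    have e : ∀ v : Fin d → ℝ, K1 (Real.sqrt (∑ i, (R.mulVec w i) ^ 2))
            * K2 (Real.sqrt (∑ i, (w i - v i) ^ 2))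
            * ((∑ i, a i * w i) * (∑ i, b i * v i))
        = (K1 (Real.sqrt (∑ i, (R.mulVec w i) ^ 2)) * (∑ i, a i * w i)) *
          (K2 (Real.sqrt (∑ i, (w i - v i) ^ 2)) * (∑ i, b i * v i)) := fun v => by ring
    simp only [e]
    rw [integral_const_mul, aux_inner K2 hK2c hK2nn c1 c2 hc1 hc2 hK2b hK2norm b w]
    have hp : ∀ p : Fin d → ℝ, (R⁻¹)ᵀ.mulVec p ⬝ᵥ R.mulVec w = ∑ i, p i * w i := by
      intro p
      rw [Matrix.mulVec_transpose, ← Matrix.dotProduct_mulVec, Matrix.mulVec_mulVec,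
        Matrix.nonsing_inv_mul _ hR, Matrix.one_mulVec]
      rfl
    rw [hp, hp, mul_assoc]
  simp only [h1]
  rw [aux_cv R hdet (fun u => K1 (Real.sqrt (∑ i, u i ^ 2)) *
        (((R⁻¹)ᵀ.mulVec a ⬝ᵥ u) * ((R⁻¹)ᵀ.mulVec b ⬝ᵥ u))) (by unfold dotProduct; fun_prop),
    aux_second hd K1 hK1c hK1nn c1 c2 hc1 hc2 hK1b, ← hmu2K1]
  have h2 : (R⁻¹)ᵀ.mulVec a ⬝ᵥ (R⁻¹)ᵀ.mulVec b = a ⬝ᵥ ((Rᵀ * R)⁻¹).mulVec b := by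
    rw [Matrix.mul_inv_rev, ← Matrix.mulVec_mulVec, Matrix.mulVec_transpose R⁻¹ a,
      ← Matrix.dotProduct_mulVec, Matrix.transpose_nonsing_inv]
  rw [h2]
  have : |R.det| ≠ 0 := abs_ne_zero.mpr hdet
  have hd' : (d : ℝ) ≠ 0 := by positivity
  field_simp
end

section
/- Let d ≥ 1, let K1, K2 : [0,∞) → [0,∞) be continuous functions satisfying K_i(t) ≤ c₁ e^{−c₂ t²} for some constants c₁, c₂ > 0 and normalized so that ∫_{ℝ^d} K_i(‖x‖) dx = 1 for i = 1, 2. Set μ₂(K_i) := ∫_{ℝ^d} ‖x‖² K_i(‖x‖) dx and let R be an invertible d×d real matrix. Then for every symmetric d×d real matrix H, ∫_{ℝ^d} ∫_{ℝ^d} K1(‖Rw‖) K2(‖w − v‖) (vᵀ H v) dv dw = (1/|det R|) · [ (μ₂(K1)/d)·tr((RᵀR)^{−1} H) + (μ₂(K2)/d)·tr(H) ]. -/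
open Finset Matrix MeasureTheory

lemma ck_cov {d : ℕ} (M : Matrix (Fin d) (Fin d) ℝ) (hM : M.det ≠ 0) (F : (Fin d → ℝ) → ℝ) :
    (∫ w, F (M.mulVec w)) = |M.det|⁻¹ * ∫ u, F u := by
  have h := Real.map_matrix_volume_pi_eq_smul_volume_pi hM
  have hu : IsUnit M.det := isUnit_iff_ne_zero.mpr hM
  have hemb : MeasurableEmbedding (Matrix.toLin' M) := by
    have hinj : Function.Injective (Matrix.toLin' M) := by
      have := Matrix.mulVec_injective_of_isUnit ((Matrix.isUnit_iff_isUnit_det M).2 hu)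
      intro a b hab
      exact this (by simpa using hab)
    exact (LinearMap.continuous_of_finiteDimensional _).measurableEmbedding hinj
  have h2 := hemb.integral_map (μ := volume) F
  rw [h, integral_smul_measure] at h2
  simp only [Matrix.toLin'_apply] at h2
  rw [← h2, ENNReal.toReal_ofReal (abs_nonneg _), abs_inv, smul_eq_mul]

lemma ck_int_base {d : ℕ} (c2 : ℝ) (hc2 : 0 < c2) :
    Integrable (fun x : Fin d → ℝ => ∏ k, ((1 + x k ^ 2) * Real.exp (-c2 * x k ^ 2))) := by
  apply Integrable.fintype_prod (f := fun (_ : Fin d) (t : ℝ) => (1 + t ^ 2) * Real.exp (-c2 * t ^ 2))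
  intro _
  have h1 := integrable_exp_neg_mul_sq hc2
  have h2 := integrable_rpow_mul_exp_neg_mul_sq hc2 (s := 2) (by norm_num)
  refine (h1.add h2).congr (Filter.Eventually.of_forall fun t => ?_)
  simp only [Pi.add_apply, Real.rpow_ofNat]
  ring

lemma ck_int {d : ℕ} (K : ℝ → ℝ) (hKc : Continuous K) (hnn : ∀ t, 0 ≤ t → 0 ≤ K t)
    (c1 c2 : ℝ) (hc1 : 0 < c1) (hc2 : 0 < c2)
    (hb : ∀ t, 0 ≤ t → K t ≤ c1 * Real.exp (-c2 * t ^ 2))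
    (p : (Fin d → ℝ) → ℝ) (hp : Continuous p) (hpb : ∀ x, |p x| ≤ ∏ k, (1 + x k ^ 2)) :
    Integrable (fun x : Fin d → ℝ => p x * K (Real.sqrt (∑ i, x i ^ 2))) := by
  refine ((ck_int_base (d := d) c2 hc2).const_mul c1).mono' ?_ (Filter.Eventually.of_forall fun x => ?_)
  · apply Continuous.aestronglyMeasurable
    fun_prop
  · have hs : 0 ≤ ∑ i, x i ^ 2 := Finset.sum_nonneg fun i _ => sq_nonneg _
    have h0 := hnn _ (Real.sqrt_nonneg (∑ i, x i ^ 2))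
    have h1 := hb _ (Real.sqrt_nonneg (∑ i, x i ^ 2))
    rw [Real.sq_sqrt hs, Finset.mul_sum, Real.exp_sum] at h1
    rw [Real.norm_eq_abs, abs_mul, abs_of_nonneg h0, Finset.prod_mul_distrib]
    calc _ ≤ (∏ k, (1 + x k ^ 2)) * (c1 * ∏ k, Real.exp (-c2 * x k ^ 2)) :=
          mul_le_mul (hpb x) h1 h0 (Finset.prod_nonneg fun i _ => by positivity)
      _ = _ := by ring

lemma ck_le_prod {d : ℕ} (x : Fin d → ℝ) (i : Fin d) : 1 + x i ^ 2 ≤ ∏ k, (1 + x k ^ 2) := by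
  rw [← Finset.mul_prod_erase Finset.univ (fun k => 1 + x k ^ 2) (Finset.mem_univ i)]
  exact le_mul_of_one_le_right (by positivity)
    (Finset.one_le_prod fun k _ => by linarith [sq_nonneg (x k)])

lemma ck_int_quad {d : ℕ} (K : ℝ → ℝ) (hKc : Continuous K) (hnn : ∀ t, 0 ≤ t → 0 ≤ K t)
    (c1 c2 : ℝ) (hc1 : 0 < c1) (hc2 : 0 < c2)
    (hb : ∀ t, 0 ≤ t → K t ≤ c1 * Real.exp (-c2 * t ^ 2)) (i j : Fin d) :
    Integrable (fun x : Fin d → ℝ => x i * x j * K (Real.sqrt (∑ i, x i ^ 2))) := by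
  refine ck_int K hKc hnn c1 c2 hc1 hc2 hb _ (by fun_prop) fun x => ?_
  have h1 := ck_le_prod x i
  have h2 := ck_le_prod x j
  rw [abs_le]
  constructor <;> nlinarith [sq_nonneg (x i + x j), sq_nonneg (x i - x j)]

lemma ck_int_lin {d : ℕ} (K : ℝ → ℝ) (hKc : Continuous K) (hnn : ∀ t, 0 ≤ t → 0 ≤ K t)
    (c1 c2 : ℝ) (hc1 : 0 < c1) (hc2 : 0 < c2)
    (hb : ∀ t, 0 ≤ t → K t ≤ c1 * Real.exp (-c2 * t ^ 2)) (i : Fin d) :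
    Integrable (fun x : Fin d → ℝ => x i * K (Real.sqrt (∑ i, x i ^ 2))) := by
  refine ck_int K hKc hnn c1 c2 hc1 hc2 hb _ (by fun_prop) fun x => ?_
  have h1 := ck_le_prod x i
  rw [abs_le]
  constructor <;> nlinarith [sq_nonneg (x i + 1), sq_nonneg (x i - 1)]

lemma ck_int_one {d : ℕ} (K : ℝ → ℝ) (hKc : Continuous K) (hnn : ∀ t, 0 ≤ t → 0 ≤ K t)
    (c1 c2 : ℝ) (hc1 : 0 < c1) (hc2 : 0 < c2)
    (hb : ∀ t, 0 ≤ t → K t ≤ c1 * Real.exp (-c2 * t ^ 2)) :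
    Integrable (fun x : Fin d → ℝ => K (Real.sqrt (∑ i, x i ^ 2))) := by
  have := ck_int (d := d) K hKc hnn c1 c2 hc1 hc2 hb (fun _ => 1) (by fun_prop) fun x => by
    rw [abs_one]
    exact Finset.one_le_prod fun k _ => by linarith [sq_nonneg (x k)]
  simpa using this

lemma ck_lin {d : ℕ} (K : ℝ → ℝ) (i : Fin d) :
    ∫ x : Fin d → ℝ, x i * K (Real.sqrt (∑ i, x i ^ 2)) = 0 := by
  have h := integral_neg_eq_self (fun x : Fin d → ℝ => x i * K (Real.sqrt (∑ i, x i ^ 2))) volume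
  simp only [Pi.neg_apply, neg_sq, neg_mul, integral_neg] at h
  linarith

lemma ck_off {d : ℕ} (K : ℝ → ℝ) (i j : Fin d) (hij : i ≠ j) :
    ∫ x : Fin d → ℝ, x i * x j * K (Real.sqrt (∑ i, x i ^ 2)) = 0 := by
  have hdet : (Matrix.diagonal (fun k : Fin d => if k = i then (-1 : ℝ) else 1)).det = -1 := by
    rw [Matrix.det_diagonal]; simp
  have h := ck_cov (Matrix.diagonal (fun k : Fin d => if k = i then (-1 : ℝ) else 1))
    (by rw [hdet]; norm_num) (fun x : Fin d → ℝ => x i * x j * K (Real.sqrt (∑ i, x i ^ 2)))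
  have hsq : ∀ (x : Fin d → ℝ) (k : Fin d), ((if k = i then (-1 : ℝ) else 1) * x k) ^ 2 = x k ^ 2 := by
    intro x k; split_ifs <;> ring
  simp only [hdet, Matrix.mulVec_diagonal, hsq, if_true, if_neg hij.symm, neg_mul, one_mul,
    integral_neg, abs_neg, abs_one, inv_one] at h
  linarith

lemma ck_swap {d : ℕ} (K : ℝ → ℝ) (i j : Fin d) :
    ∫ x : Fin d → ℝ, x i * x i * K (Real.sqrt (∑ i, x i ^ 2)) =
    ∫ x : Fin d → ℝ, x j * x j * K (Real.sqrt (∑ i, x i ^ 2)) := by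
  have h := (volume_measurePreserving_piCongrLeft (fun _ : Fin d => ℝ) (Equiv.swap i j)).integral_comp'
    (fun x : Fin d → ℝ => x i * x i * K (Real.sqrt (∑ i, x i ^ 2)))
  rw [← h]
  congr 1
  ext x
  have he : ∀ k, (MeasurableEquiv.piCongrLeft (fun _ : Fin d => ℝ) (Equiv.swap i j)) x k
      = x (Equiv.swap i j k) := by
    intro k
    obtain ⟨l, rfl⟩ := (Equiv.swap i j).surjective k
    rw [MeasurableEquiv.coe_piCongrLeft, Equiv.piCongrLeft_apply_apply, Equiv.swap_apply_self]
  simp only [he, Equiv.swap_apply_left]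
  rw [Equiv.sum_comp (Equiv.swap i j) (fun k => x k ^ 2)]

lemma ck_diag {d : ℕ} (hd : 1 ≤ d) (K : ℝ → ℝ) (hKc : Continuous K) (hnn : ∀ t, 0 ≤ t → 0 ≤ K t)
    (c1 c2 : ℝ) (hc1 : 0 < c1) (hc2 : 0 < c2)
    (hb : ∀ t, 0 ≤ t → K t ≤ c1 * Real.exp (-c2 * t ^ 2)) (i : Fin d) :
    ∫ x : Fin d → ℝ, x i * x i * K (Real.sqrt (∑ i, x i ^ 2)) =
    (∫ x : Fin d → ℝ, (∑ i, x i ^ 2) * K (Real.sqrt (∑ i, x i ^ 2))) / d := by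
  have hd' : (d : ℝ) ≠ 0 := by positivity
  rw [eq_div_iff hd']
  have : (fun x : Fin d → ℝ => (∑ i, x i ^ 2) * K (Real.sqrt (∑ i, x i ^ 2)))
      = fun x => ∑ k, x k * x k * K (Real.sqrt (∑ i, x i ^ 2)) := by
    ext x; rw [Finset.sum_mul]; simp only [sq]
  rw [this, integral_finsetSum _ fun k _ => ck_int_quad K hKc hnn c1 c2 hc1 hc2 hb k k]
  rw [Finset.sum_congr rfl fun k _ => ck_swap K k i]
  simp [mul_comm]

lemma ck_quad_expand {d : ℕ} (M : Matrix (Fin d) (Fin d) ℝ) (x : Fin d → ℝ) (a : ℝ) :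
    (x ⬝ᵥ M.mulVec x) * a = ∑ i, ∑ j, M i j * (x i * x j * a) := by
  simp only [dotProduct, Matrix.mulVec, Finset.sum_mul, Finset.mul_sum]
  refine Finset.sum_congr rfl fun i _ => Finset.sum_congr rfl fun j _ => by ring

lemma ck_form {d : ℕ} (hd : 1 ≤ d) (K : ℝ → ℝ) (hKc : Continuous K) (hnn : ∀ t, 0 ≤ t → 0 ≤ K t)
    (c1 c2 : ℝ) (hc1 : 0 < c1) (hc2 : 0 < c2)
    (hb : ∀ t, 0 ≤ t → K t ≤ c1 * Real.exp (-c2 * t ^ 2)) (M : Matrix (Fin d) (Fin d) ℝ) :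
    Integrable (fun x : Fin d → ℝ => (x ⬝ᵥ M.mulVec x) * K (Real.sqrt (∑ i, x i ^ 2))) ∧
    ∫ x : Fin d → ℝ, (x ⬝ᵥ M.mulVec x) * K (Real.sqrt (∑ i, x i ^ 2)) =
    (∫ x : Fin d → ℝ, (∑ i, x i ^ 2) * K (Real.sqrt (∑ i, x i ^ 2))) / d * M.trace := by
  simp only [ck_quad_expand]
  have hI : ∀ i j, Integrable (fun x : Fin d → ℝ => M i j * (x i * x j * K (Real.sqrt (∑ i, x i ^ 2)))) :=
    fun i j => (ck_int_quad K hKc hnn c1 c2 hc1 hc2 hb i j).const_mul _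
  refine ⟨integrable_finsetSum _ fun i _ => integrable_finsetSum _ fun j _ => hI i j, ?_⟩
  rw [integral_finsetSum _ fun i _ => integrable_finsetSum _ fun j _ => hI i j]
  rw [Matrix.trace, Finset.mul_sum]
  refine Finset.sum_congr rfl fun i _ => ?_
  rw [integral_finsetSum _ fun j _ => hI i j, Finset.sum_eq_single i]
  · rw [integral_const_mul, ck_diag hd K hKc hnn c1 c2 hc1 hc2 hb, Matrix.diag_apply, mul_comm]
  · intro j _ hj
    rw [integral_const_mul, ck_off K i j hj.symm, mul_zero]
  · simp

lemma ck_linform {d : ℕ} (K : ℝ → ℝ) (hKc : Continuous K) (hnn : ∀ t, 0 ≤ t → 0 ≤ K t)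
    (c1 c2 : ℝ) (hc1 : 0 < c1) (hc2 : 0 < c2)
    (hb : ∀ t, 0 ≤ t → K t ≤ c1 * Real.exp (-c2 * t ^ 2)) (b : Fin d → ℝ) :
    Integrable (fun x : Fin d → ℝ => (b ⬝ᵥ x) * K (Real.sqrt (∑ i, x i ^ 2))) ∧
    ∫ x : Fin d → ℝ, (b ⬝ᵥ x) * K (Real.sqrt (∑ i, x i ^ 2)) = 0 := by
  simp only [dotProduct, Finset.sum_mul, mul_assoc]
  have hI : ∀ i, Integrable (fun x : Fin d → ℝ => b i * (x i * K (Real.sqrt (∑ i, x i ^ 2)))) :=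
    fun i => (ck_int_lin K hKc hnn c1 c2 hc1 hc2 hb i).const_mul _
  refine ⟨integrable_finsetSum _ fun i _ => hI i, ?_⟩
  rw [integral_finsetSum _ fun i _ => hI i]
  exact Finset.sum_eq_zero fun i _ => by rw [integral_const_mul, ck_lin, mul_zero]

/-- Second-order moment of the composed landmark alternating diffusion
kernel.  With `K1, K2 : [0,∞) → [0,∞)` continuous, bounded by Gaussians and
normalized so that `∫ Kᵢ(‖x‖) dx = 1`, `μ₂(Kᵢ) = ∫ ‖x‖² Kᵢ(‖x‖) dx`, and `R` an
invertible `d × d` real matrix, one has for every symmetric `d × d` real matrix `H`: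
`∫∫ K1(‖Rw‖) K2(‖w−v‖) (vᵀ H v) dv dw
  = (1/|det R|) [ (μ₂(K1)/d) tr((RᵀR)⁻¹ H) + (μ₂(K2)/d) tr(H) ]`
(Euclidean norms, Lebesgue measure). -/
theorem composed_kernel_second_order_moment {d : ℕ} (hd : 1 ≤ d)
    (K1 K2 : ℝ → ℝ) (hK1c : Continuous K1) (hK2c : Continuous K2)
    (hK1nn : ∀ t, 0 ≤ t → 0 ≤ K1 t) (hK2nn : ∀ t, 0 ≤ t → 0 ≤ K2 t)
    (c1 c2 : ℝ) (hc1 : 0 < c1) (hc2 : 0 < c2)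
    (hK1b : ∀ t, 0 ≤ t → K1 t ≤ c1 * Real.exp (-c2 * t ^ 2))
    (hK2b : ∀ t, 0 ≤ t → K2 t ≤ c1 * Real.exp (-c2 * t ^ 2))
    (hK1norm : (∫ x : Fin d → ℝ, K1 (Real.sqrt (∑ i, x i ^ 2))) = 1)
    (hK2norm : (∫ x : Fin d → ℝ, K2 (Real.sqrt (∑ i, x i ^ 2))) = 1)
    (mu2K1 mu2K2 : ℝ)
    (hmu2K1 : mu2K1 = ∫ x : Fin d → ℝ, (∑ i, x i ^ 2) * K1 (Real.sqrt (∑ i, x i ^ 2)))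
    (hmu2K2 : mu2K2 = ∫ x : Fin d → ℝ, (∑ i, x i ^ 2) * K2 (Real.sqrt (∑ i, x i ^ 2)))
    (R : Matrix (Fin d) (Fin d) ℝ) (hR : IsUnit R.det)
    (H : Matrix (Fin d) (Fin d) ℝ) (hH : H.IsSymm) :
    (∫ w : Fin d → ℝ, ∫ v : Fin d → ℝ,
        K1 (Real.sqrt (∑ i, (R.mulVec w i) ^ 2))
          * K2 (Real.sqrt (∑ i, (w i - v i) ^ 2))
          * (v ⬝ᵥ H.mulVec v))
      = |R.det|⁻¹ * (mu2K1 / d * ((Rᵀ * R)⁻¹ * H).trace + mu2K2 / d * H.trace) := by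
  have hinner : ∀ w : Fin d → ℝ, (∫ v : Fin d → ℝ,
        K1 (Real.sqrt (∑ i, (R.mulVec w i) ^ 2))
          * K2 (Real.sqrt (∑ i, (w i - v i) ^ 2))
          * (v ⬝ᵥ H.mulVec v)) =
      K1 (Real.sqrt (∑ i, (R.mulVec w i) ^ 2)) * (w ⬝ᵥ H.mulVec w + mu2K2 / d * H.trace) := by
    intro w
    have h1 := integral_sub_left_eq_self (fun v : Fin d → ℝ =>
        K1 (Real.sqrt (∑ i, (R.mulVec w i) ^ 2))
          * K2 (Real.sqrt (∑ i, (w i - v i) ^ 2))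
          * (v ⬝ᵥ H.mulVec v)) volume w
    rw [← h1]
    obtain ⟨hq, hq'⟩ := ck_form hd K2 hK2c hK2nn c1 c2 hc1 hc2 hK2b H
    obtain ⟨hl, hl'⟩ := ck_linform K2 hK2c hK2nn c1 c2 hc1 hc2 hK2b (H.mulVec w + w ᵥ* H)
    have ho := (ck_int_one (d := d) K2 hK2c hK2nn c1 c2 hc1 hc2 hK2b).const_mul (w ⬝ᵥ H.mulVec w)
    have he : ∀ s : Fin d → ℝ, K1 (Real.sqrt (∑ i, (R.mulVec w i) ^ 2))
          * K2 (Real.sqrt (∑ i, (w i - (w - s) i) ^ 2))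
          * ((w - s) ⬝ᵥ H.mulVec (w - s)) =
        K1 (Real.sqrt (∑ i, (R.mulVec w i) ^ 2)) *
        ((w ⬝ᵥ H.mulVec w) * K2 (Real.sqrt (∑ i, s i ^ 2))
          - ((H.mulVec w + w ᵥ* H) ⬝ᵥ s) * K2 (Real.sqrt (∑ i, s i ^ 2))
          + (s ⬝ᵥ H.mulVec s) * K2 (Real.sqrt (∑ i, s i ^ 2))) := by
      intro s
      simp only [Pi.sub_apply, sub_sub_cancel, Matrix.mulVec_sub, dotProduct_sub, sub_dotProduct,
        add_dotProduct, ← Matrix.dotProduct_mulVec]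
      rw [dotProduct_comm (H.mulVec w) s]
      ring
    have hs : Integrable (fun s : Fin d → ℝ => (w ⬝ᵥ H.mulVec w) * K2 (Real.sqrt (∑ i, s i ^ 2))
          - ((H.mulVec w + w ᵥ* H) ⬝ᵥ s) * K2 (Real.sqrt (∑ i, s i ^ 2))) := ho.sub hl
    simp only [he]
    rw [integral_const_mul, integral_add hs hq, integral_sub ho hl, hl', hq', ← hmu2K2,
      integral_const_mul, hK2norm]
    ring
  simp only [hinner]
  have hcov := ck_cov R hR.ne_zero (fun u => K1 (Real.sqrt (∑ i, u i ^ 2)) *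
    ((R⁻¹.mulVec u) ⬝ᵥ H.mulVec (R⁻¹.mulVec u) + mu2K2 / d * H.trace))
  simp only [Matrix.mulVec_mulVec _ R⁻¹ R, Matrix.nonsing_inv_mul R hR, Matrix.one_mulVec] at hcov
  rw [hcov]
  congr 1
  obtain ⟨hq, hq'⟩ := ck_form hd K1 hK1c hK1nn c1 c2 hc1 hc2 hK1b ((R⁻¹)ᵀ * H * R⁻¹)
  have ho := (ck_int_one (d := d) K1 hK1c hK1nn c1 c2 hc1 hc2 hK1b).const_mul (mu2K2 / d * H.trace)
  have he : ∀ u : Fin d → ℝ, K1 (Real.sqrt (∑ i, u i ^ 2)) *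
    ((R⁻¹.mulVec u) ⬝ᵥ H.mulVec (R⁻¹.mulVec u) + mu2K2 / d * H.trace) =
     (u ⬝ᵥ ((R⁻¹)ᵀ * H * R⁻¹).mulVec u) * K1 (Real.sqrt (∑ i, u i ^ 2)) +
      (mu2K2 / d * H.trace) * K1 (Real.sqrt (∑ i, u i ^ 2)) := by
    intro u
    have : (R⁻¹.mulVec u) ⬝ᵥ H.mulVec (R⁻¹.mulVec u) = u ⬝ᵥ ((R⁻¹)ᵀ * H * R⁻¹).mulVec u := by
      rw [← Matrix.mulVec_mulVec, ← Matrix.mulVec_mulVec, Matrix.dotProduct_mulVec u,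
        Matrix.vecMul_transpose]
    rw [this]
    ring
  simp only [he]
  rw [integral_add hq ho, hq', integral_const_mul, hK1norm, ← hmu2K1, mul_one]
  congr 2
  rw [Matrix.mul_inv_rev, Matrix.transpose_nonsing_inv, Matrix.trace_mul_comm, Matrix.mul_assoc]
end
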